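/- Fourth-order two-body error term (paper eq. A17d): for i ≠ j and any phase-space point (x,p) with r_ij ≠ 0, the left-nested canonical Poisson bracket satisfies {{{{V_ij, T}, V_ij}, T}, V_ij}(x,p) = −4 G³ (m i)(m j)((m i)+(m j))² / r_ij⁷. -/

import Mathlib

open scoped RealInnerProductSpace BigOperators

noncomputable section

/-- Three-dimensional Euclidean space. -/
abbrev E3 : Type := EuclideanSpace ℝ (Fin 3)

/-- Phase space for `N` particles: positions and momenta. -/
abbrev Phase (N : ℕ) : Type := (Fin N → E3) × (Fin N → E3)

/-- Gradient of a phase-space function with respect to the `k`-th position. -/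
def gradPos {N : ℕ} (A : Phase N → ℝ) (k : Fin N) (w : Phase N) : E3 :=
  gradient (fun y => A (Function.update w.1 k y, w.2)) (w.1 k)

/-- Gradient of a phase-space function with respect to the `k`-th momentum. -/
def gradMom {N : ℕ} (A : Phase N → ℝ) (k : Fin N) (w : Phase N) : E3 :=
  gradient (fun y => A (w.1, Function.update w.2 k y)) (w.2 k)

/-- Canonical Poisson bracket of two phase-space functions. -/
def poisson {N : ℕ} (A B : Phase N → ℝ) (w : Phase N) : ℝ :=
  ∑ k, (⟪gradPos A k w, gradMom B k w⟫ - ⟪gradMom A k w, gradPos B k w⟫)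

/-- Kinetic energy `T = Σ_i ‖p_i‖²/(2 m_i)`. -/
def kinetic {N : ℕ} (m : Fin N → ℝ) (w : Phase N) : ℝ :=
  ∑ i, ‖w.2 i‖ ^ 2 / (2 * m i)

/-- Pair potential `V_ij = −G m_i m_j / ‖x_i − x_j‖`. -/
def pairPot {N : ℕ} (G : ℝ) (m : Fin N → ℝ) (i j : Fin N) (w : Phase N) : ℝ :=
  -(G * m i * m j) / ‖w.1 i - w.1 j‖

/-!
For functions `U`, `V` of the positions alone, `{U, T}` is linear in the momenta, so `{{U, T}, V}`
is again a function of the positions: it is `-Γ(U, V)`, where `Γ(U, V) = ∑ₖ ∇ₖU · ∇ₖV / mₖ`.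
Bracketing with `T` and `V` once more cancels the sign, so `{{{{V, T}, V}, T}, V} = Γ(Γ(V, V), V)`.

When all functions depend only on the separation `y = xᵢ - xⱼ`, `Γ` is the Euclidean pairing of
gradients in `y`, divided by the reduced mass. For a radial potential `V = φ(r)` this gives first
`Γ(V, V) = (1/mᵢ + 1/mⱼ) φ'(r)²`, and then `2 (1/mᵢ + 1/mⱼ)² φ'(r)² φ''(r)`.
-/

open scoped Gradient Topology

section RealDeriv

variable {r : ℝ}

theorem hasDerivAt_neg_const_div (c : ℝ) (hr : r ≠ 0) :
    HasDerivAt (fun s => -c / s) (c / r ^ 2) r := by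
  simpa [div_eq_mul_inv] using (hasDerivAt_inv hr).const_mul (-c)

theorem hasDerivAt_const_div_sq (c : ℝ) (hr : r ≠ 0) :
    HasDerivAt (fun s => c / s ^ 2) (-2 * c / r ^ 3) r := by
  refine ((hasDerivAt_const r c).div (hasDerivAt_pow 2 r) (pow_ne_zero 2 hr)).congr_deriv ?_
  field_simp
  ring

end RealDeriv

section Gradient

variable {𝕜 F : Type*} [RCLike 𝕜] [NormedAddCommGroup F] [InnerProductSpace 𝕜 F] [CompleteSpace F]

theorem gradient_add_const (f : F → 𝕜) (c : 𝕜) (x : F) : ∇ (fun y => f y + c) x = ∇ f x := by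
  simp only [gradient, fderiv_add_const]

theorem gradient_comp_sub_const (f : F → 𝕜) (a x : F) :
    ∇ (fun y => f (y - a)) x = ∇ f (x - a) := by
  simp only [gradient, fderiv_comp_sub]

theorem gradient_comp_neg (f : F → 𝕜) (x : F) : ∇ (fun y => f (-y)) x = -∇ f (-x) := by
  have hneg : fderiv 𝕜 (fun y => f (-y)) x = -fderiv 𝕜 f (-x) := by
    refine ((ContinuousLinearEquiv.neg 𝕜).comp_right_fderiv (f := f) (x := x)).trans ?_
    ext z
    simp
  simp only [gradient, hneg, map_neg]

theorem gradient_comp_const_sub (f : F → 𝕜) (a x : F) :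
    ∇ (fun y => f (a - y)) x = -∇ f (a - x) := by
  simpa only [neg_sub] using
    (gradient_comp_sub_const (fun y => f (-y)) a x).trans (gradient_comp_neg f (x - a))

end Gradient

section RealGradient

variable {E : Type*} [NormedAddCommGroup E] [InnerProductSpace ℝ E] [CompleteSpace E]

theorem gradient_inner_right (a x : E) : ∇ (fun y => ⟪a, y⟫) x = a :=
  HasGradientAt.gradient (InnerProductSpace.toDual ℝ E a).hasFDerivAt

theorem gradient_norm_sq_div (c : ℝ) (x : E) : ∇ (fun y => ‖y‖ ^ 2 / c) x = (2 / c) • x := by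
  refine HasGradientAt.gradient (hasGradientAt_iff_hasFDerivAt.2 ?_)
  refine ((hasStrictFDerivAt_norm_sq x).hasFDerivAt.mul_const c⁻¹).congr_fderiv ?_
  ext z
  simp only [smul_apply, innerSL_apply_apply, nsmul_eq_mul, smul_eq_mul,
    InnerProductSpace.toDual_apply_apply, real_inner_smul_left]
  push_cast
  ring

theorem hasGradientAt_norm {x : E} (hx : x ≠ 0) :
    HasGradientAt (fun y : E => ‖y‖) (‖x‖⁻¹ • x) x := by
  have hsqrt := (hasStrictFDerivAt_norm_sq x).hasFDerivAt.sqrt (by simpa using hx)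
  simp only [Real.sqrt_sq (norm_nonneg _)] at hsqrt
  refine hasGradientAt_iff_hasFDerivAt.2 (hsqrt.congr_fderiv ?_)
  ext z
  simp only [smul_apply, innerSL_apply_apply, nsmul_eq_mul, smul_eq_mul,
    InnerProductSpace.toDual_apply_apply, real_inner_smul_left]
  push_cast
  field_simp

theorem gradient_comp_norm {φ : ℝ → ℝ} {φ' : ℝ} {x : E} (hφ : HasDerivAt φ φ' ‖x‖)
    (hx : x ≠ 0) : ∇ (fun y => φ ‖y‖) x = (φ' / ‖x‖) • x := by
  refine HasGradientAt.gradient (hasGradientAt_iff_hasFDerivAt.2 ?_)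
  refine (hφ.comp_hasFDerivAt x (hasGradientAt_norm hx).hasFDerivAt).congr_fderiv ?_
  rw [← map_smul, smul_smul, div_eq_mul_inv]

theorem inner_gradient_comp_norm {φ ψ : ℝ → ℝ} {φ' ψ' : ℝ} {x : E} (hφ : HasDerivAt φ φ' ‖x‖)
    (hψ : HasDerivAt ψ ψ' ‖x‖) (hx : x ≠ 0) :
    ⟪∇ (fun y => φ ‖y‖) x, ∇ (fun y => ψ ‖y‖) x⟫ = φ' * ψ' := by
  have hr : ‖x‖ ≠ 0 := norm_ne_zero_iff.2 hx
  rw [gradient_comp_norm hφ hx, gradient_comp_norm hψ hx, real_inner_smul_left,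
    real_inner_smul_right, real_inner_self_eq_norm_sq]
  field_simp

theorem inner_gradient_inner_gradient_self_comp_norm (c : ℝ) {φ φ' : ℝ → ℝ} {φ'' : ℝ} {x : E}
    (hφ : ∀ᶠ r in 𝓝 ‖x‖, HasDerivAt φ (φ' r) r) (hφ' : HasDerivAt φ' φ'' ‖x‖) (hx : x ≠ 0) :
    ⟪∇ (fun y => c * ⟪∇ (fun z : E => φ ‖z‖) y, ∇ (fun z : E => φ ‖z‖) y⟫) x,
        ∇ (fun y => φ ‖y‖) x⟫ = 2 * c * φ' ‖x‖ ^ 2 * φ'' := by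
  have hradial : (fun y => c * ⟪∇ (fun z : E => φ ‖z‖) y, ∇ (fun z : E => φ ‖z‖) y⟫) =ᶠ[𝓝 x]
      fun y => c * φ' ‖y‖ ^ 2 := by
    filter_upwards [continuous_norm.continuousAt.eventually hφ, eventually_ne_nhds hx]
      with y hy hy₀
    rw [inner_gradient_comp_norm hy hy hy₀, sq]
  have hderiv : HasDerivAt (fun r => c * φ' r ^ 2) (c * (2 * φ' ‖x‖ * φ'')) ‖x‖ := by
    simpa using (hφ'.pow 2).const_mul c
  rw [hradial.gradient_eq, inner_gradient_comp_norm hderiv hφ.self_of_nhds hx]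
  ring

end RealGradient

section PartialGradient

variable {ι E : Type*} [DecidableEq ι] [NormedAddCommGroup E] [InnerProductSpace ℝ E]
  [CompleteSpace E]

/-- Gradient of a function of a family of vectors in its `k`-th argument, the others being frozen.
Both `gradPos` and `gradMom` are instances of it. -/
def partialGradient (U : (ι → E) → ℝ) (k : ι) (x : ι → E) : E :=
  ∇ (fun y => U (Function.update x k y)) (x k)

theorem partialGradient_sum [Fintype ι] (f : ι → E → ℝ) (k : ι) (x : ι → E) :
    partialGradient (fun x => ∑ l, f l (x l)) k x = ∇ (f k) (x k) := by
  have hsplit (y : E) : ∑ l, f l (Function.update x k y l) =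
      f k y + ∑ l ∈ Finset.univ.erase k, f l (x l) := by
    rw [← Finset.add_sum_erase _ _ (Finset.mem_univ k), Function.update_self]
    congr 1
    exact Finset.sum_congr rfl fun l hl => by
      rw [Function.update_of_ne (Finset.ne_of_mem_erase hl)]
  simp only [partialGradient, hsplit, gradient_add_const]

variable {i j : ι}

theorem partialGradient_comp_sub_left (hij : i ≠ j) (f : E → ℝ) (x : ι → E) :
    partialGradient (fun x => f (x i - x j)) i x = ∇ f (x i - x j) := by
  simp only [partialGradient, Function.update_self, Function.update_of_ne hij.symm,
    gradient_comp_sub_const]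

theorem partialGradient_comp_sub_right (hij : i ≠ j) (f : E → ℝ) (x : ι → E) :
    partialGradient (fun x => f (x i - x j)) j x = -∇ f (x i - x j) := by
  simp only [partialGradient, Function.update_self, Function.update_of_ne hij,
    gradient_comp_const_sub]

theorem partialGradient_comp_sub_of_ne {k : ι} (hki : k ≠ i) (hkj : k ≠ j) (f : E → ℝ)
    (x : ι → E) : partialGradient (fun x => f (x i - x j)) k x = 0 := by
  simp only [partialGradient, Function.update_of_ne hki.symm, Function.update_of_ne hkj.symm,
    gradient_fun_const]

variable [Fintype ι]

/-- The pairing `Γ(U, V) = ∑ₖ ∇ₖU · ∇ₖV / mₖ` of the differentials of two functions of the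
positions, that is, their inner product in the metric dual to the kinetic energy. -/
def kineticPairing (m : ι → ℝ) (U V : (ι → E) → ℝ) (x : ι → E) : ℝ :=
  ∑ k, (m k)⁻¹ * ⟪partialGradient U k x, partialGradient V k x⟫

theorem kineticPairing_comp_sub (m : ι → ℝ) (hij : i ≠ j) (f g : E → ℝ) (x : ι → E) :
    kineticPairing m (fun x => f (x i - x j)) (fun x => g (x i - x j)) x =
      ((m i)⁻¹ + (m j)⁻¹) * ⟪∇ f (x i - x j), ∇ g (x i - x j)⟫ := by
  rw [kineticPairing, Fintype.sum_eq_add i j hij fun k hk => by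
    rw [partialGradient_comp_sub_of_ne hk.1 hk.2, inner_zero_left, mul_zero]]
  simp only [partialGradient_comp_sub_left hij, partialGradient_comp_sub_right hij,
    inner_neg_neg, add_mul]

end PartialGradient

section Poisson

variable {N : ℕ}

theorem gradPos_comp_fst (U : (Fin N → E3) → ℝ) (k : Fin N) (w : Phase N) :
    gradPos (fun w => U w.1) k w = partialGradient U k w.1 :=
  rfl

theorem gradMom_comp_fst (U : (Fin N → E3) → ℝ) (k : Fin N) (w : Phase N) :
    gradMom (fun w => U w.1) k w = 0 :=
  gradient_fun_const (w.2 k) (U w.1)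

theorem gradPos_kinetic (m : Fin N → ℝ) (k : Fin N) (w : Phase N) :
    gradPos (kinetic m) k w = 0 :=
  gradient_fun_const (w.1 k) (kinetic m w)

theorem gradMom_kinetic (m : Fin N → ℝ) (k : Fin N) (w : Phase N) :
    gradMom (kinetic m) k w = (m k)⁻¹ • w.2 k := by
  calc gradMom (kinetic m) k w = ∇ (fun y => ‖y‖ ^ 2 / (2 * m k)) (w.2 k) :=
        partialGradient_sum (fun l y => ‖y‖ ^ 2 / (2 * m l)) k w.2
    _ = (m k)⁻¹ • w.2 k := by
        rw [gradient_norm_sq_div, div_mul_cancel_left₀ two_ne_zero]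

theorem gradMom_sum_inner (X : Fin N → (Fin N → E3) → E3) (k : Fin N) (w : Phase N) :
    gradMom (fun w => ∑ l, ⟪X l w.1, w.2 l⟫) k w = X k w.1 :=
  (partialGradient_sum (fun l y => ⟪X l w.1, y⟫) k w.2).trans (gradient_inner_right _ _)

theorem poisson_kinetic (m : Fin N → ℝ) (U : (Fin N → E3) → ℝ) :
    poisson (fun w => U w.1) (kinetic m) =
      fun w => ∑ k, ⟪(m k)⁻¹ • partialGradient U k w.1, w.2 k⟫ := by
  funext w
  simp only [poisson, gradPos_comp_fst, gradMom_kinetic, gradPos_kinetic, inner_zero_right,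
    sub_zero, real_inner_smul_left, real_inner_smul_right]

theorem poisson_sum_inner (X : Fin N → (Fin N → E3) → E3) (V : (Fin N → E3) → ℝ)
    (w : Phase N) :
    poisson (fun w => ∑ k, ⟪X k w.1, w.2 k⟫) (fun w => V w.1) w =
      -∑ k, ⟪X k w.1, partialGradient V k w.1⟫ := by
  simp only [poisson, gradMom_comp_fst, gradPos_comp_fst, gradMom_sum_inner, inner_zero_right,
    zero_sub, Finset.sum_neg_distrib]

theorem poisson_poisson_kinetic (m : Fin N → ℝ) (U V : (Fin N → E3) → ℝ) :
    poisson (poisson (fun w => U w.1) (kinetic m)) (fun w => V w.1) =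
      fun w => -kineticPairing m U V w.1 := by
  funext w
  rw [poisson_kinetic, poisson_sum_inner (fun k x => (m k)⁻¹ • partialGradient U k x)]
  simp only [real_inner_smul_left, kineticPairing]

theorem poisson_poisson_kinetic_comp_sub (m : Fin N → ℝ) {i j : Fin N} (hij : i ≠ j)
    (f g : E3 → ℝ) :
    poisson (poisson (fun w => f (w.1 i - w.1 j)) (kinetic m)) (fun w => g (w.1 i - w.1 j)) =
      fun w => -((m i)⁻¹ + (m j)⁻¹) * ⟪∇ f (w.1 i - w.1 j), ∇ g (w.1 i - w.1 j)⟫ := by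
  rw [poisson_poisson_kinetic m (fun x => f (x i - x j)) fun x => g (x i - x j)]
  simp only [kineticPairing_comp_sub m hij, neg_mul]

end Poisson

theorem fourth_order_VTVTV_general {N : ℕ} (m : Fin N → ℝ) (hm : ∀ k, m k ≠ 0) (i j : Fin N)
    (w : Phase N) (hr : ‖w.1 i - w.1 j‖ ≠ 0) {φ φ' : ℝ → ℝ} {φ'' : ℝ}
    (hφ : ∀ᶠ r in 𝓝 ‖w.1 i - w.1 j‖, HasDerivAt φ (φ' r) r)
    (hφ' : HasDerivAt φ' φ'' ‖w.1 i - w.1 j‖) :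
    poisson (poisson (poisson (poisson (fun w => φ ‖w.1 i - w.1 j‖) (kinetic m))
        (fun w => φ ‖w.1 i - w.1 j‖)) (kinetic m)) (fun w => φ ‖w.1 i - w.1 j‖) w =
      2 * ((m i + m j) / (m i * m j)) ^ 2 * φ' ‖w.1 i - w.1 j‖ ^ 2 * φ'' := by
  have hij : i ≠ j := by
    rintro rfl
    simp at hr
  have hbracket (f : E3 → ℝ) := poisson_poisson_kinetic_comp_sub m hij f fun y => φ ‖y‖
  rw [hbracket fun y => φ ‖y‖, hbracket fun y =>
    -((m i)⁻¹ + (m j)⁻¹) * ⟪∇ (fun z : E3 => φ ‖z‖) y, ∇ (fun z : E3 => φ ‖z‖) y⟫]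
  dsimp only
  rw [inner_gradient_inner_gradient_self_comp_norm _ hφ hφ' (norm_ne_zero_iff.1 hr),
    inv_add_inv (hm i) (hm j)]
  ring

/-- Fourth-order two-body error term (paper eq. A17d):
`{{{{V_ij,T},V_ij},T},V_ij} = −4 G³ m_i m_j (m_i + m_j)² / r_ij⁷`. -/
theorem fourth_order_VTVTV {N : ℕ} (G : ℝ) (hG : 0 < G) (m : Fin N → ℝ)
    (hm : ∀ i, 0 < m i) (i j : Fin N) (hij : i ≠ j) (w : Phase N)
    (hr : ‖w.1 i - w.1 j‖ ≠ 0) :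
    poisson (poisson (poisson (poisson (pairPot G m i j) (kinetic m))
        (pairPot G m i j)) (kinetic m)) (pairPot G m i j) w =
      -4 * G ^ 3 * m i * m j * (m i + m j) ^ 2 / ‖w.1 i - w.1 j‖ ^ 7 := by
  have hi := (hm i).ne'
  have hj := (hm j).ne'
  have hφ : ∀ᶠ r in 𝓝 ‖w.1 i - w.1 j‖, HasDerivAt (fun s => -(G * m i * m j) / s) _ r :=
    (eventually_ne_nhds hr).mono fun _ => hasDerivAt_neg_const_div _
  refine (fourth_order_VTVTV_general m (fun k => (hm k).ne') i j w hr hφ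
    (hasDerivAt_const_div_sq _ hr)).trans ?_
  field_simp
  ring
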